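/- Let Ω ⊂ ℝ^d be compact and convex, μ, ρ ∈ 𝒫(Ω), and λ > 0. Then the following are equivalent: (1) ρ ∈ B_λ(μ); (2) there is a λ-Lipschitz function in the subdifferential ∂((1/2)W₂²(·,μ))(ρ), i.e. a λ-Lipschitz φ with ∫φ^{c₂}dμ + ∫φ dρ = (1/2)W₂²(ρ,μ); (3) (1/2)W₂²(μ,ρ) = 𝓘_{c_{2,λ}}(μ,ρ). -/

import Mathlib

/-!
Everything rests on Kantorovich duality on the compact set `Ω`, with attainment on both sides
(`exists_optimal_and_potential`). For a continuous cost `c`, the least value of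
`∫ φ dμ + ∫ ψ dρ` over continuous pairs with `f ≤ φ ⊕ ψ` is sublinear in `f`. Hahn–Banach gives a
linear functional below it that touches it at `-c`; this functional is positive with the right
marginals, so the Riesz–Markov–Kakutani theorem represents it by a coupling whose cost is the dual
value (`exists_plan_dual`). If `c` is `K`-Lipschitz in its second variable, the dual problem reduces
to normalised `K`-Lipschitz potentials, a compact set by Arzelà–Ascoli, so it has a `K`-Lipschitz
maximiser (`exists_lipschitz_potential`).

The Huber cost `h` satisfies `h ≤ c₂`, with equality exactly on `{|x - y| ≤ λ}`. Hence
`𝓘_h ≤ W₂²/2`. A plan for `B_λ(μ)` has the same cost for `h` and for `c₂`, which gives equality of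
the two values; conversely, if they agree, a `c₂`-optimal plan is `h`-optimal and lives on
`{h = c₂}`.

If the two values agree, a `λ`-Lipschitz Huber potential `φ` satisfies
`𝓘_h ≤ ∫ φ^h dμ + ∫ φ dρ ≤ ∫ φ^{c₂} dμ + ∫ φ dρ ≤ W₂²/2`, so it lies in the subdifferential.
Conversely, for a `λ`-Lipschitz `φ`, convexity of `Ω` gives `φ^{c₂}(x) + φ(y) ≤ h(x, y)`
(`ctrans_c2_le_huber`), and weak duality gives `W₂²/2 ≤ 𝓘_h`.
-/

open MeasureTheory Filter Topology

noncomputable section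

abbrev Ed (d : ℕ) := EuclideanSpace ℝ (Fin d)

variable {d : ℕ}

/-- `γ` is a coupling (transport plan) between `μ` and `ν`. -/
def IsCoupling (μ ν : Measure (Ed d)) (γ : Measure (Ed d × Ed d)) : Prop :=
  γ.map Prod.fst = μ ∧ γ.map Prod.snd = ν

/-- The optimal transport cost `𝓘_c(μ,ν)` for the pointwise cost `c`. -/
def tCost (c : Ed d → Ed d → ℝ) (μ ν : Measure (Ed d)) : ℝ :=
  sInf {r | ∃ γ : Measure (Ed d × Ed d), IsCoupling μ ν γ ∧ r = ∫ p, c p.1 p.2 ∂γ}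

/-- The Wasserstein-1 distance. -/
def W1 (μ ν : Measure (Ed d)) : ℝ := tCost (fun x y => ‖x - y‖) μ ν

/-- The squared Wasserstein-2 distance `W₂²(μ,ν)`. -/
def W2sq (μ ν : Measure (Ed d)) : ℝ := tCost (fun x y => ‖x - y‖ ^ 2) μ ν

/-- The quadratic cost `c₂(x,y) = |x-y|²/2`. -/
def c2 (x y : Ed d) : ℝ := ‖x - y‖ ^ 2 / 2

/-- The Huber cost `c_{2,λ}`. -/
def huber (lam : ℝ) (x y : Ed d) : ℝ :=
  if ‖x - y‖ ≤ lam then ‖x - y‖ ^ 2 / 2 else lam * ‖x - y‖ - lam ^ 2 / 2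

/-- The `c`-transform on `Ω`: `φ^c(x) = inf_{y ∈ Ω} c(x,y) - φ(y)`. -/
def ctrans (c : Ed d → Ed d → ℝ) (Ω : Set (Ed d)) (φ : Ed d → ℝ) (x : Ed d) : ℝ :=
  sInf ((fun y => c x y - φ y) '' Ω)

/-- A Borel probability measure concentrated on `Ω`. -/
def ProbOn (Ω : Set (Ed d)) (μ : Measure (Ed d)) : Prop :=
  IsProbabilityMeasure μ ∧ μ Ωᶜ = 0

/-- `γ` is an optimal transport plan between `μ` and `ν` for cost `c`. -/
def IsOptimalPlan (c : Ed d → Ed d → ℝ) (μ ν : Measure (Ed d))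
    (γ : Measure (Ed d × Ed d)) : Prop :=
  IsCoupling μ ν γ ∧ ∀ γ' : Measure (Ed d × Ed d), IsCoupling μ ν γ' →
    ∫ p, c p.1 p.2 ∂γ ≤ ∫ p, c p.1 p.2 ∂γ'

/-- `T` is an optimal transport map from `μ` to `ν` for cost `c`. -/
def IsOptimalMap (c : Ed d → Ed d → ℝ) (μ ν : Measure (Ed d)) (T : Ed d → Ed d) : Prop :=
  AEMeasurable T μ ∧ μ.map T = ν ∧
    ∀ γ : Measure (Ed d × Ed d), IsCoupling μ ν γ →
      ∫ x, c x (T x) ∂μ ≤ ∫ p, c p.1 p.2 ∂γ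

/-- The WROF functional `(1/2) W₂²(μ,ρ) + λ W₁(ρ,ν)`. -/
def wrof (lam : ℝ) (μ ν ρ : Measure (Ed d)) : ℝ := W2sq μ ρ / 2 + lam * W1 ρ ν

/-- `ρ ∈ B_λ(μ)`: there exists an optimal plan for the Huber cost `c_{2,λ}` from `μ` to `ρ`
supported in `{|x-y| ≤ λ}`. -/
def Bset (lam : ℝ) (μ ρ : Measure (Ed d)) : Prop :=
  ∃ γ : Measure (Ed d × Ed d), IsOptimalPlan (huber lam) μ ρ γ ∧
    γ {p : Ed d × Ed d | lam < ‖p.1 - p.2‖} = 0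

/-- `φ` solves the dual problem `sup_{φ ∈ λ-Lip(Ω)} ∫ φ^{c₂} dμ + ∫ φ dν`. -/
def DualSol (Ω : Set (Ed d)) (lam : ℝ) (μ ν : Measure (Ed d)) (φ : Ed d → ℝ) : Prop :=
  LipschitzOnWith (Real.toNNReal lam) φ Ω ∧
    ∀ ψ : Ed d → ℝ, LipschitzOnWith (Real.toNNReal lam) ψ Ω →
      (∫ x, ctrans c2 Ω ψ x ∂μ) + ∫ x, ψ x ∂ν ≤ (∫ x, ctrans c2 Ω φ x ∂μ) + ∫ x, φ x ∂ν

/-- `φ ∈ ∂((1/2)W₂²(·,μ))(ρ)`, i.e. `φ ∈ C(Ω)` with `∫φ^{c₂}dμ + ∫φ dρ = (1/2)W₂²(ρ,μ)`. -/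
def InSubdiffW2 (Ω : Set (Ed d)) (μ ρ : Measure (Ed d)) (φ : Ed d → ℝ) : Prop :=
  ContinuousOn φ Ω ∧ (∫ x, ctrans c2 Ω φ x ∂μ) + ∫ x, φ x ∂ρ = W2sq ρ μ / 2

/-- The divergence `D_λ(ν,ρ)` with reference measure `μ`. -/
def Dlam (Ω : Set (Ed d)) (lam : ℝ) (μ ν ρ : Measure (Ed d)) : EReal :=
  ((W2sq ν μ / 2 : ℝ) : EReal) - ((W2sq ρ μ / 2 : ℝ) : EReal) -
    ⨆ φ ∈ {φ : Ed d → ℝ | InSubdiffW2 Ω μ ρ φ ∧ LipschitzOnWith (Real.toNNReal lam) φ Ω},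
      (((∫ x, φ x ∂ν) - ∫ x, φ x ∂ρ : ℝ) : EReal)

/-- `φ` is `c`-concave on `Ω`: `φ = ψ^c` for some `ψ`. -/
def CConcaveOn (c : Ed d → Ed d → ℝ) (Ω : Set (Ed d)) (φ : Ed d → ℝ) : Prop :=
  ∃ ψ : Ed d → ℝ, ∀ x ∈ Ω, φ x = ctrans c Ω ψ x

/-- The (topological) support of a measure. -/
def msupport {α : Type*} [TopologicalSpace α] [MeasurableSpace α] (γ : Measure α) : Set α :=
  {p | ∀ U : Set α, IsOpen U → p ∈ U → γ U ≠ 0}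

/-! ### The `c`-transform on a compact space -/

section CTransform

variable {X : Type*} [MetricSpace X] [CompactSpace X]

/-- The `c`-transform `x ↦ inf_y c(x,y) - ψ(y)` on a compact space, as a continuous function. -/
def ctr (c : C(X × X, ℝ)) (ψ : C(X, ℝ)) : C(X, ℝ) :=
  ⟨fun x => sInf ((fun y => c (x, y) - ψ y) '' Set.univ),
    IsCompact.continuous_sInf (f := fun x y => c (x, y) - ψ y) isCompact_univ
      (by simp only [Function.HasUncurry.uncurry, id]; fun_prop)⟩

lemma ctr_le (c : C(X × X, ℝ)) (ψ : C(X, ℝ)) (x y : X) : ctr c ψ x ≤ c (x, y) - ψ y :=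
  csInf_le (isCompact_univ.bddBelow_image (by fun_prop)) ⟨y, trivial, rfl⟩

lemma le_ctr (c : C(X × X, ℝ)) (ψ : C(X, ℝ)) (x : X) {a : ℝ} (h : ∀ y, a ≤ c (x, y) - ψ y) :
    a ≤ ctr c ψ x := by
  refine le_csInf ⟨_, x, trivial, rfl⟩ ?_
  rintro _ ⟨y, -, rfl⟩
  exact h y

lemma ctr_lipschitz (c : C(X × X, ℝ)) (ψ : C(X, ℝ)) {K : NNReal}
    (hK : ∀ y, LipschitzWith K fun x => c (x, y)) : LipschitzWith K (ctr c ψ) := by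
  refine LipschitzWith.of_le_add_mul K fun x x' => ?_
  rw [← sub_le_iff_le_add]
  refine le_ctr c ψ x' fun y => ?_
  have h1 := ctr_le c ψ x y
  have h2 := (hK y).le_add_mul x x'
  linarith

end CTransform

/-! ### Kantorovich duality on a compact space -/

section Duality

variable {X : Type*} [MetricSpace X] [CompactSpace X] [MeasurableSpace X]

/-- The values `∫ φ dμ + ∫ ψ dρ` of the pairs of continuous functions with `f ≤ φ ⊕ ψ`. -/
def superVals (μ ρ : Measure X) (f : C(X × X, ℝ)) : Set ℝ :=
  {r | ∃ φ ψ : C(X, ℝ), (∀ x y, f (x, y) ≤ φ x + ψ y) ∧ r = (∫ x, φ x ∂μ) + ∫ x, ψ x ∂ρ}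

/-- The least value `∫ φ dμ + ∫ ψ dρ` among continuous pairs with `f ≤ φ ⊕ ψ`; it is sublinear
in `f`, and minus its value at `-c` is the dual transport value for the cost `c`. -/
def superCost (μ ρ : Measure X) (f : C(X × X, ℝ)) : ℝ := sInf (superVals μ ρ f)

lemma superVals_nonempty (μ ρ : Measure X) (f : C(X × X, ℝ)) : (superVals μ ρ f).Nonempty :=
  ⟨_, ContinuousMap.const X ‖f‖, 0, fun x y => by
    simpa using (abs_le.1 (f.norm_coe_le_norm (x, y))).2, rfl⟩

lemma le_superCost (μ ρ : Measure X) {f : C(X × X, ℝ)} {a : ℝ}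
    (h : ∀ φ ψ : C(X, ℝ), (∀ x y, f (x, y) ≤ φ x + ψ y) → a ≤ (∫ x, φ x ∂μ) + ∫ x, ψ x ∂ρ) :
    a ≤ superCost μ ρ f := by
  refine le_csInf (superVals_nonempty μ ρ f) ?_
  rintro r ⟨φ, ψ, hh, rfl⟩
  exact h φ ψ hh

lemma exists_superCost_lt (μ ρ : Measure X) (f : C(X × X, ℝ)) {ε : ℝ} (hε : 0 < ε) :
    ∃ φ ψ : C(X, ℝ), (∀ x y, f (x, y) ≤ φ x + ψ y) ∧
      (∫ x, φ x ∂μ) + ∫ x, ψ x ∂ρ < superCost μ ρ f + ε := by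
  obtain ⟨r, ⟨φ, ψ, h, rfl⟩, hr⟩ := exists_lt_of_csInf_lt (superVals_nonempty μ ρ f)
    (show sInf (superVals μ ρ f) < superCost μ ρ f + ε by unfold superCost; linarith)
  exact ⟨φ, ψ, h, hr⟩

variable [BorelSpace X]

lemma integrable_contMap (μ : Measure X) [IsProbabilityMeasure μ] (φ : C(X, ℝ)) :
    Integrable (fun x => φ x) μ :=
  φ.continuous.integrable_of_hasCompactSupport (HasCompactSupport.of_compactSpace _)

variable (μ ρ : Measure X) [IsProbabilityMeasure μ] [IsProbabilityMeasure ρ]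

/-- Integrating a pointwise bound `a ≤ φ ⊕ ψ` by a constant in each variable separately. -/
lemma le_integral_add {φ ψ : C(X, ℝ)} {a : ℝ} (h : ∀ x y, a ≤ φ x + ψ y) :
    a ≤ (∫ x, φ x ∂μ) + ∫ x, ψ x ∂ρ := by
  have h1 : ∀ y, a - ψ y ≤ ∫ x, φ x ∂μ := by
    intro y
    have := integral_mono (μ := μ) (integrable_const (a - ψ y)) (integrable_contMap μ φ)
      (fun x => by have := h x y; simp only; linarith)
    simpa using this
  have h2 := integral_mono (μ := ρ) (integrable_const (a - ∫ x, φ x ∂μ)) (integrable_contMap ρ ψ)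
      (fun y => by have := h1 y; simp only; linarith)
  simp only [integral_const, probReal_univ, one_smul] at h2
  linarith

lemma superVals_bddBelow (f : C(X × X, ℝ)) : BddBelow (superVals μ ρ f) := by
  refine ⟨-‖f‖, ?_⟩
  rintro r ⟨φ, ψ, h, rfl⟩
  refine le_integral_add μ ρ fun x y => le_trans ?_ (h x y)
  exact (abs_le.1 (f.norm_coe_le_norm (x, y))).1

lemma superCost_le {f : C(X × X, ℝ)} {φ ψ : C(X, ℝ)} (h : ∀ x y, f (x, y) ≤ φ x + ψ y) :
    superCost μ ρ f ≤ (∫ x, φ x ∂μ) + ∫ x, ψ x ∂ρ :=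
  csInf_le (superVals_bddBelow μ ρ f) ⟨φ, ψ, h, rfl⟩

lemma superCost_add (f g : C(X × X, ℝ)) :
    superCost μ ρ (f + g) ≤ superCost μ ρ f + superCost μ ρ g := by
  refine le_of_forall_pos_le_add fun ε hε => ?_
  obtain ⟨φ, ψ, h, hl⟩ := exists_superCost_lt μ ρ f (half_pos hε)
  obtain ⟨φ', ψ', h', hl'⟩ := exists_superCost_lt μ ρ g (half_pos hε)
  have := superCost_le μ ρ (f := f + g) (φ := φ + φ') (ψ := ψ + ψ') (fun x y => by
    have := h x y; have := h' x y
    simp only [ContinuousMap.add_apply]; linarith)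
  simp only [ContinuousMap.add_apply] at this
  rw [integral_add (integrable_contMap μ φ) (integrable_contMap μ φ'),
    integral_add (integrable_contMap ρ ψ) (integrable_contMap ρ ψ')] at this
  linarith

lemma superCost_smul_le (t : ℝ) (ht : 0 < t) (f : C(X × X, ℝ)) :
    superCost μ ρ (t • f) ≤ t * superCost μ ρ f := by
  rw [mul_comm, ← div_le_iff₀ ht]
  refine le_superCost μ ρ fun φ ψ h => ?_
  have := superCost_le μ ρ (f := t • f) (φ := t • φ) (ψ := t • ψ) (fun x y => by
    have := mul_le_mul_of_nonneg_left (h x y) ht.le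
    simp only [ContinuousMap.smul_apply, smul_eq_mul]; linarith)
  simp only [ContinuousMap.smul_apply, smul_eq_mul, integral_const_mul] at this
  rw [div_le_iff₀ ht]; linarith

lemma superCost_smul (t : ℝ) (ht : 0 < t) (f : C(X × X, ℝ)) :
    superCost μ ρ (t • f) = t * superCost μ ρ f := by
  refine le_antisymm (superCost_smul_le μ ρ t ht f) ?_
  have := superCost_smul_le μ ρ t⁻¹ (inv_pos.2 ht) (t • f)
  rw [smul_smul, inv_mul_cancel₀ ht.ne', one_smul] at this
  have h2 := mul_le_mul_of_nonneg_left this ht.le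
  rwa [← mul_assoc, mul_inv_cancel₀ ht.ne', one_mul] at h2

lemma superCost_zero : superCost μ ρ 0 = 0 := by
  have := superCost_smul μ ρ 2 two_pos 0
  rw [smul_zero] at this
  linarith

/-- Hahn–Banach: a linear functional below `superCost` which touches it at `f₀`. -/
lemma exists_functional (f₀ : C(X × X, ℝ)) :
    ∃ g : C(X × X, ℝ) →ₗ[ℝ] ℝ, g f₀ = superCost μ ρ f₀ ∧ ∀ f, g f ≤ superCost μ ρ f := by
  have H : ∀ t : ℝ, t • f₀ = 0 → (RingHom.id ℝ) t • superCost μ ρ f₀ = 0 := by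
    intro t ht
    rcases smul_eq_zero.1 ht with h | h
    · simp [h]
    · simp [h, superCost_zero]
  obtain ⟨g, hg, hle⟩ := exists_extension_of_le_sublinear
    (LinearPMap.mkSpanSingleton' f₀ (superCost μ ρ f₀) H) (superCost μ ρ)
    (superCost_smul μ ρ) (superCost_add μ ρ) (by
      rintro ⟨x, hx⟩
      obtain ⟨t, rfl⟩ := Submodule.mem_span_singleton.1 hx
      rw [LinearPMap.mkSpanSingleton'_apply]
      simp only [RingHom.id_apply, smul_eq_mul]
      rcases lt_trichotomy t 0 with ht | rfl | ht
      · have h1 := superCost_add μ ρ (t • f₀) ((-t) • f₀)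
        rw [← add_smul, add_neg_cancel, zero_smul, superCost_zero,
          superCost_smul μ ρ (-t) (by linarith)] at h1
        linarith
      · simp [superCost_zero]
      · rw [superCost_smul μ ρ t ht])
  refine ⟨g, ?_, hle⟩
  have := hg ⟨f₀, Submodule.mem_span_singleton_self f₀⟩
  exact this.trans (LinearPMap.mkSpanSingleton'_apply_self _ _ _ _)

/-- Kantorovich duality on a compact metric space: some coupling has cost equal to the dual value.
The Hahn–Banach functional touching `superCost` at `-c` is positive with marginals `μ` and `ρ`,
and the Riesz–Markov–Kakutani theorem represents it by a measure. -/
theorem exists_plan_dual (c : C(X × X, ℝ)) :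
    ∃ γ : Measure (X × X), γ.map Prod.fst = μ ∧ γ.map Prod.snd = ρ ∧
      ∀ ε > 0, ∃ φ ψ : C(X, ℝ), (∀ x y, φ x + ψ y ≤ c (x, y)) ∧
        (∫ p, c p ∂γ) - ε ≤ (∫ x, φ x ∂μ) + ∫ x, ψ x ∂ρ := by
  obtain ⟨g, hg, hle⟩ := exists_functional μ ρ (-c)
  have hnonpos : ∀ f : C(X × X, ℝ), (∀ p, f p ≤ 0) → g f ≤ 0 := fun f hf => by
    refine (hle f).trans ((superCost_le μ ρ (φ := 0) (ψ := 0) ?_).trans ?_)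
    · intro x y; simpa using hf (x, y)
    · simp
  let toC : CompactlySupportedContinuousMap (X × X) ℝ →ₗ[ℝ] C(X × X, ℝ) :=
    { toFun := fun f => f.toContinuousMap
      map_add' := fun _ _ => rfl
      map_smul' := fun _ _ => rfl }
  let Λ : CompactlySupportedContinuousMap (X × X) ℝ →ₚ[ℝ] ℝ :=
    PositiveLinearMap.mk₀ (g.comp toC) (fun f hf => by
      have := hnonpos (-(toC f)) (fun p => neg_nonpos.2 (hf p))
      rw [map_neg] at this
      simpa using this)
  have hint : ∀ f : C(X × X, ℝ), ∫ p, f p ∂(RealRMK.rieszMeasure Λ) = g f := fun f =>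
    RealRMK.integral_rieszMeasure Λ (CompactlySupportedContinuousMap.continuousMapEquiv f)
  have hmarg : ∀ (f : C(X × X, ℝ)) (φ ψ : C(X, ℝ)), (∀ x y, f (x, y) = φ x + ψ y) →
      g f = (∫ x, φ x ∂μ) + ∫ x, ψ x ∂ρ := by
    intro f φ ψ h
    refine le_antisymm ((hle f).trans (superCost_le μ ρ fun x y => (h x y).le)) ?_
    have h1 := (hle (-f)).trans (superCost_le μ ρ (φ := -φ) (ψ := -ψ) (fun x y => by
      simp [h x y, add_comm]))
    simp only [map_neg, ContinuousMap.neg_apply, integral_neg] at h1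
    linarith
  refine ⟨RealRMK.rieszMeasure Λ, ?_, ?_, ?_⟩
  · refine ext_of_forall_integral_eq_of_IsFiniteMeasure fun φ => ?_
    rw [integral_map measurable_fst.aemeasurable φ.continuous.aestronglyMeasurable]
    have := hint ⟨fun p : X × X => φ p.1, by fun_prop⟩
    simp only [ContinuousMap.coe_mk] at this
    rw [this, hmarg _ φ.toContinuousMap 0 (fun x y => by simp)]
    simp
  · refine ext_of_forall_integral_eq_of_IsFiniteMeasure fun φ => ?_
    rw [integral_map measurable_snd.aemeasurable φ.continuous.aestronglyMeasurable]
    have := hint ⟨fun p : X × X => φ p.2, by fun_prop⟩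
    simp only [ContinuousMap.coe_mk] at this
    rw [this, hmarg _ 0 φ.toContinuousMap (fun x y => by simp)]
    simp
  · intro ε hε
    obtain ⟨φ, ψ, h, hl⟩ := exists_superCost_lt μ ρ (-c) hε
    refine ⟨-φ, -ψ, fun x y => ?_, ?_⟩
    · have := h x y
      simp only [ContinuousMap.neg_apply] at this ⊢
      linarith
    · rw [hint c]
      simp only [map_neg] at hg
      simp only [ContinuousMap.neg_apply, integral_neg]
      linarith

/-- A maximising dual pair whose second member is `K`-Lipschitz, for a cost `K`-Lipschitz in its
second variable. The `c`-transform lets the dual problem be restricted to `K`-Lipschitz `ψ` with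
`ψ x₀ = 0`, a compact set by Arzelà–Ascoli, on which the dual functional is continuous. -/
theorem exists_lipschitz_potential (c : C(X × X, ℝ)) {K : NNReal}
    (hK : ∀ x, LipschitzWith K fun y => c (x, y)) (V : ℝ)
    (hV : ∀ ε > 0, ∃ φ ψ : C(X, ℝ), (∀ x y, φ x + ψ y ≤ c (x, y)) ∧
        V - ε ≤ (∫ x, φ x ∂μ) + ∫ x, ψ x ∂ρ) :
    ∃ φ ψ : C(X, ℝ), LipschitzWith K ψ ∧ (∀ x y, φ x + ψ y ≤ c (x, y)) ∧
        V ≤ (∫ x, φ x ∂μ) + ∫ x, ψ x ∂ρ := by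
  obtain ⟨x₀⟩ : Nonempty X := nonempty_of_isProbabilityMeasure μ
  let A : Set (BoundedContinuousFunction X ℝ) := {ψ | LipschitzWith K ψ ∧ ψ x₀ = 0}
  have hAclosed : IsClosed A := by
    have : A = (⋂ x, ⋂ y, {ψ | dist (ψ x) (ψ y) ≤ K * dist x y}) ∩ {ψ | ψ x₀ = 0} := by
      ext ψ
      simp [A, lipschitzWith_iff_dist_le_mul]
    rw [this]
    refine IsClosed.inter (isClosed_iInter fun x => isClosed_iInter fun y => ?_) ?_
    · exact isClosed_le ((continuous_eval_const x).dist (continuous_eval_const y)) continuous_const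
    · exact isClosed_eq (continuous_eval_const x₀) continuous_const
  have hAcomp : IsCompact A := by
    refine BoundedContinuousFunction.arzela_ascoli₂
      (Metric.closedBall (0 : ℝ) (K * Metric.diam (Set.univ : Set X)))
      (isCompact_closedBall _ _) A hAclosed ?_ ?_
    · intro ψ x hψ
      rw [Metric.mem_closedBall, ← hψ.2]
      refine (hψ.1.dist_le_mul x x₀).trans ?_
      gcongr
      exact Metric.dist_le_diam_of_mem isCompact_univ.isBounded trivial trivial
    · exact (LipschitzWith.uniformEquicontinuous _ K fun ψ => ψ.2.1).equicontinuous
  let J : BoundedContinuousFunction X ℝ → ℝ := fun ψ =>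
    (∫ x, ctr c ψ.toContinuousMap x ∂μ) + ∫ x, ψ.toContinuousMap x ∂ρ
  have hJ : LipschitzWith 2 J := by
    refine LipschitzWith.of_le_add_mul 2 fun ψ ψ' => ?_
    have hd : ∀ y, |ψ y - ψ' y| ≤ dist ψ ψ' := fun y => by
      rw [← Real.dist_eq]
      exact BoundedContinuousFunction.dist_coe_le_dist y
    have h1 : (∫ x, ctr c ψ.toContinuousMap x ∂μ)
        ≤ ∫ x, (ctr c ψ'.toContinuousMap x + dist ψ ψ') ∂μ := by
      refine integral_mono (integrable_contMap μ _)
        ((integrable_contMap μ _).add (integrable_const _)) fun x => ?_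
      simp only
      rw [← sub_le_iff_le_add]
      refine le_ctr c _ x fun y => ?_
      have h2 := ctr_le c ψ.toContinuousMap x y
      have h3 := (abs_le.1 (hd y)).2
      simp only [BoundedContinuousFunction.coe_toContinuousMap] at h2 ⊢
      have h4 := (abs_le.1 (hd y)).1
      linarith
    have h2 : (∫ x, ψ.toContinuousMap x ∂ρ)
        ≤ ∫ x, (ψ'.toContinuousMap x + dist ψ ψ') ∂ρ := by
      refine integral_mono (integrable_contMap ρ _)
        ((integrable_contMap ρ _).add (integrable_const _)) fun x => ?_
      have h3 := (abs_le.1 (hd x)).2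
      simp only [BoundedContinuousFunction.coe_toContinuousMap]
      linarith
    rw [integral_add (integrable_contMap μ _) (integrable_const _)] at h1
    rw [integral_add (integrable_contMap ρ _) (integrable_const _)] at h2
    simp only [integral_const, probReal_univ, one_smul] at h1 h2
    simp only [J, NNReal.coe_ofNat]
    linarith
  have hA0 : (0 : BoundedContinuousFunction X ℝ) ∈ A :=
    ⟨LipschitzWith.const' 0, rfl⟩
  obtain ⟨ψ, hψA, hmax⟩ := hAcomp.exists_isMaxOn ⟨0, hA0⟩ hJ.continuous.continuousOn
  refine ⟨ctr c ψ.toContinuousMap, ψ.toContinuousMap, hψA.1, fun x y => ?_, ?_⟩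
  · have := ctr_le c ψ.toContinuousMap x y
    linarith
  · refine le_of_forall_pos_le_add fun ε hε => ?_
    obtain ⟨φ, ψ₁, hle, hval⟩ := hV ε hε
    -- `ψ₂` is the best partner of `φ`; subtracting `ψ₂ x₀` leaves the dual value unchanged
    let ψ₂ : C(X, ℝ) := ctr (c.comp ⟨Prod.swap, continuous_swap⟩) φ
    let ψ₃ : C(X, ℝ) := ψ₂ - ContinuousMap.const X (ψ₂ x₀)
    have hψ₂ : ∀ x y, φ x ≤ c (x, y) - ψ₂ y := fun x y => by
      have := ctr_le (c.comp ⟨Prod.swap, continuous_swap⟩) φ y x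
      simp only [ContinuousMap.comp_apply, ContinuousMap.coe_mk, Prod.swap_prod_mk] at this
      simp only [ψ₂]
      linarith
    have hL : LipschitzWith K ψ₂ := ctr_lipschitz _ _ hK
    have hmem : BoundedContinuousFunction.mkOfCompact ψ₃ ∈ A := by
      refine ⟨LipschitzWith.of_dist_le_mul fun x y => ?_, ?_⟩
      · have := hL.dist_le_mul x y
        simpa [ψ₃] using this
      · simp [ψ₃]
    have h1 : (∫ x, φ x ∂μ) ≤ ∫ x, (ctr c ψ₃ x - ψ₂ x₀) ∂μ := by
      refine integral_mono (integrable_contMap μ _)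
        ((integrable_contMap μ _).sub (integrable_const _)) fun x => ?_
      simp only
      rw [le_sub_iff_add_le]
      refine le_ctr c ψ₃ x fun y => ?_
      have := hψ₂ x y
      simp only [ψ₃, ContinuousMap.sub_apply, ContinuousMap.const_apply]
      linarith
    have h2 : (∫ x, ψ₁ x ∂ρ) ≤ ∫ x, (ψ₃ x + ψ₂ x₀) ∂ρ := by
      refine integral_mono (integrable_contMap ρ _)
        ((integrable_contMap ρ _).add (integrable_const _)) fun y => ?_
      simp only [ψ₃, ContinuousMap.sub_apply, ContinuousMap.const_apply, sub_add_cancel]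
      refine le_ctr _ φ y fun x => ?_
      have := hle x y
      simp only [ContinuousMap.comp_apply, ContinuousMap.coe_mk, Prod.swap_prod_mk]
      linarith
    rw [integral_sub (integrable_contMap μ _) (integrable_const _)] at h1
    rw [integral_add (integrable_contMap ρ _) (integrable_const _)] at h2
    simp only [integral_const, probReal_univ, one_smul] at h1 h2
    have h3 : (∫ x, ctr c ψ₃ x ∂μ) + ∫ x, ψ₃ x ∂ρ ≤
        (∫ x, ctr c ψ.toContinuousMap x ∂μ) + ∫ x, ψ.toContinuousMap x ∂ρ := by
      have := isMaxOn_iff.1 hmax _ hmem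
      simp only [J] at this
      exact this
    linarith

end Duality

/-! ### Optimal plans and potentials for measures on a compact subset of `ℝ^d` -/

section Euclidean

variable {Ω : Set (Ed d)} {μ ρ : Measure (Ed d)}

lemma IsCoupling.ae_mem {γ : Measure (Ed d × Ed d)} (h : IsCoupling μ ρ γ)
    (hΩ : IsClosed Ω) (hμ : ProbOn Ω μ) (hρ : ProbOn Ω ρ) : ∀ᵐ p ∂γ, p ∈ Ω ×ˢ Ω := by
  have h1 : ∀ᵐ p ∂γ, p.1 ∈ Ω := by
    have := hμ.2
    rw [← h.1, Measure.map_apply measurable_fst hΩ.measurableSet.compl] at this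
    exact this
  have h2 : ∀ᵐ p ∂γ, p.2 ∈ Ω := by
    have := hρ.2
    rw [← h.2, Measure.map_apply measurable_snd hΩ.measurableSet.compl] at this
    exact this
  filter_upwards [h1, h2] with p a b using ⟨a, b⟩

lemma IsCoupling.isProb {γ : Measure (Ed d × Ed d)} (h : IsCoupling μ ρ γ)
    (hμ : ProbOn Ω μ) : IsProbabilityMeasure γ := by
  have := hμ.1
  refine ⟨?_⟩
  rw [← this.measure_univ, ← h.1, Measure.map_apply measurable_fst MeasurableSet.univ,
    Set.preimage_univ]

lemma IsCoupling.swap {γ : Measure (Ed d × Ed d)} (h : IsCoupling μ ρ γ) :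
    IsCoupling ρ μ (γ.map Prod.swap) := by
  constructor
  · rw [Measure.map_map measurable_fst measurable_swap]
    exact h.2
  · rw [Measure.map_map measurable_snd measurable_swap]
    exact h.1

lemma IsCoupling.integrable {γ : Measure (Ed d × Ed d)} (h : IsCoupling μ ρ γ)
    (hΩ : IsCompact Ω) (hμ : ProbOn Ω μ) (hρ : ProbOn Ω ρ) {f : Ed d × Ed d → ℝ}
    (hf : Continuous f) : Integrable f γ := by
  have := h.isProb hμ
  have h1 : IntegrableOn f (Ω ×ˢ Ω) γ := hf.continuousOn.integrableOn_compact (hΩ.prod hΩ)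
  rwa [IntegrableOn, Measure.restrict_eq_self_of_ae_mem (h.ae_mem hΩ.isClosed hμ hρ)] at h1

lemma ProbOn.integrable (hΩ : IsCompact Ω) (hμ : ProbOn Ω μ) {f : Ed d → ℝ}
    (hf : Continuous f) : Integrable f μ := by
  have := hμ.1
  have h1 : IntegrableOn f Ω μ := hf.continuousOn.integrableOn_compact hΩ
  rwa [IntegrableOn, Measure.restrict_eq_self_of_ae_mem (show ∀ᵐ x ∂μ, x ∈ Ω from hμ.2)] at h1

lemma ProbOn.nonempty (hμ : ProbOn Ω μ) : Ω.Nonempty := by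
  have := hμ.1
  by_contra h
  rw [Set.not_nonempty_iff_eq_empty] at h
  have h2 := hμ.2
  rw [h, Set.compl_empty, measure_univ] at h2
  exact one_ne_zero h2

/-- Weak duality: an admissible dual pair is bounded by the cost of any coupling. It suffices that
the pair is admissible on `Ω × Ω`, where every coupling is concentrated. -/
lemma weak_duality (hΩ : IsCompact Ω) (hμ : ProbOn Ω μ) (hρ : ProbOn Ω ρ)
    {c : Ed d → Ed d → ℝ} (hc : Continuous fun p : Ed d × Ed d => c p.1 p.2) {φ ψ : Ed d → ℝ}
    (hφ : Continuous φ) (hψ : Continuous ψ) (h : ∀ x ∈ Ω, ∀ y ∈ Ω, φ x + ψ y ≤ c x y)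
    {γ : Measure (Ed d × Ed d)} (hγ : IsCoupling μ ρ γ) :
    (∫ x, φ x ∂μ) + ∫ y, ψ y ∂ρ ≤ ∫ p, c p.1 p.2 ∂γ := by
  have e1 : ∫ x, φ x ∂μ = ∫ p, φ p.1 ∂γ := by
    rw [← hγ.1, integral_map measurable_fst.aemeasurable hφ.aestronglyMeasurable]
  have e2 : ∫ x, ψ x ∂ρ = ∫ p, ψ p.2 ∂γ := by
    rw [← hγ.2, integral_map measurable_snd.aemeasurable hψ.aestronglyMeasurable]
  have i1 : Integrable (fun p : Ed d × Ed d => φ p.1) γ :=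
    hγ.integrable hΩ hμ hρ (hφ.comp continuous_fst)
  have i2 : Integrable (fun p : Ed d × Ed d => ψ p.2) γ :=
    hγ.integrable hΩ hμ hρ (hψ.comp continuous_snd)
  rw [e1, e2, ← integral_add i1 i2]
  refine integral_mono_ae (i1.add i2) (hγ.integrable hΩ hμ hρ hc) ?_
  filter_upwards [hγ.ae_mem hΩ.isClosed hμ hρ] with p hp using h _ hp.1 _ hp.2

lemma continuous_ctrans (hΩ : IsCompact Ω) {c : Ed d → Ed d → ℝ}
    (hc : Continuous fun p : Ed d × Ed d => c p.1 p.2) {φ : Ed d → ℝ} (hφ : Continuous φ) :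
    Continuous (ctrans c Ω φ) :=
  IsCompact.continuous_sInf (f := fun x y => c x y - φ y) hΩ
    (hc.sub (hφ.comp continuous_snd))

lemma ctrans_le (hΩ : IsCompact Ω) {c : Ed d → Ed d → ℝ}
    (hc : Continuous fun p : Ed d × Ed d => c p.1 p.2) {φ : Ed d → ℝ} (hφ : Continuous φ)
    (x : Ed d) {y : Ed d} (hy : y ∈ Ω) : ctrans c Ω φ x ≤ c x y - φ y := by
  have hcx : Continuous (c x) := hc.comp (Continuous.prodMk_right x)
  exact csInf_le (hΩ.bddBelow_image (hcx.sub hφ).continuousOn) ⟨y, hy, rfl⟩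

lemma le_ctrans (hΩ : Ω.Nonempty) {c : Ed d → Ed d → ℝ} {φ : Ed d → ℝ}
    {x : Ed d} {a : ℝ} (h : ∀ y ∈ Ω, a ≤ c x y - φ y) : a ≤ ctrans c Ω φ x := by
  refine le_csInf (hΩ.image _) ?_
  rintro _ ⟨y, hy, rfl⟩
  exact h y hy

/-- Existence of an optimal plan, and dual attainment by a `K`-Lipschitz potential when the cost
is `K`-Lipschitz in its second variable. -/
theorem exists_optimal_and_potential (hΩ : IsCompact Ω) (hμ : ProbOn Ω μ) (hρ : ProbOn Ω ρ)
    {c : Ed d → Ed d → ℝ} (hc : Continuous fun p : Ed d × Ed d => c p.1 p.2) :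
    ∃ γ, IsOptimalPlan c μ ρ γ ∧ ∀ K : NNReal, (∀ x, LipschitzWith K (c x)) →
      ∃ ψ : Ed d → ℝ, LipschitzWith K ψ ∧
        ∫ p, c p.1 p.2 ∂γ ≤ (∫ x, ctrans c Ω ψ x ∂μ) + ∫ y, ψ y ∂ρ := by
  have hmap : ∀ {ν : Measure (Ed d)}, ProbOn Ω ν →
      (ν.comap ((↑) : Ω → Ed d)).map (↑) = ν := fun {ν} hν => by
    rw [map_comap_subtype_coe hΩ.measurableSet,
      Measure.restrict_eq_self_of_ae_mem (show ∀ᵐ x ∂ν, x ∈ Ω from hν.2)]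
  have hprob : ∀ {ν : Measure (Ed d)}, ProbOn Ω ν →
      IsProbabilityMeasure (ν.comap ((↑) : Ω → Ed d)) := fun {ν} hν => by
    have h1 := hν.1.measure_univ
    rw [← hmap hν, Measure.map_apply measurable_subtype_coe MeasurableSet.univ,
      Set.preimage_univ] at h1
    exact ⟨h1⟩
  have hint : ∀ {ν : Measure (Ed d)}, ProbOn Ω ν → ∀ {f : Ed d → ℝ}, Continuous f →
      ∫ x, f x ∂ν = ∫ x : Ω, f x ∂(ν.comap ((↑) : Ω → Ed d)) := fun {ν} hν {f} hf => by
    conv_lhs => rw [← hmap hν]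
    rw [integral_map measurable_subtype_coe.aemeasurable hf.aestronglyMeasurable]
  have := hprob hμ
  have := hprob hρ
  have : CompactSpace Ω := isCompact_iff_compactSpace.1 hΩ
  let cΩ : C(Ω × Ω, ℝ) := ⟨fun p => c p.1 p.2, hc.comp
    ((continuous_subtype_val.comp continuous_fst).prodMk
      (continuous_subtype_val.comp continuous_snd))⟩
  obtain ⟨γ', h1, h2, hdual⟩ := exists_plan_dual (μ.comap ((↑) : Ω → Ed d))
    (ρ.comap ((↑) : Ω → Ed d)) cΩ
  have hm : Measurable (Prod.map ((↑) : Ω → Ed d) ((↑) : Ω → Ed d)) :=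
    measurable_subtype_coe.prodMap measurable_subtype_coe
  let γ : Measure (Ed d × Ed d) := γ'.map (Prod.map (↑) (↑))
  have hγ : IsCoupling μ ρ γ := by
    constructor
    · conv_rhs => rw [← hmap hμ, ← h1]
      rw [Measure.map_map measurable_fst hm, Measure.map_map measurable_subtype_coe measurable_fst]
      rfl
    · conv_rhs => rw [← hmap hρ, ← h2]
      rw [Measure.map_map measurable_snd hm, Measure.map_map measurable_subtype_coe measurable_snd]
      rfl
  have hval : ∫ p, c p.1 p.2 ∂γ = ∫ p, cΩ p ∂γ' := by
    rw [integral_map hm.aemeasurable hc.aestronglyMeasurable]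
    rfl
  refine ⟨γ, ⟨hγ, fun γ₂ hγ₂ => ?_⟩, fun K hK => ?_⟩
  · refine le_of_forall_pos_le_add fun ε hε => ?_
    obtain ⟨φ, ψ, hle, hv⟩ := hdual ε hε
    obtain ⟨φ', hφ'⟩ := φ.exists_restrict_eq hΩ.isClosed
    obtain ⟨ψ', hψ'⟩ := ψ.exists_restrict_eq hΩ.isClosed
    have hw := weak_duality hΩ hμ hρ hc φ'.continuous ψ'.continuous (fun x hx y hy => by
      have := hle ⟨x, hx⟩ ⟨y, hy⟩
      rw [← hφ', ← hψ'] at this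
      exact this) hγ₂
    rw [hint hμ φ'.continuous, hint hρ ψ'.continuous] at hw
    rw [← hφ', ← hψ', ← hval] at hv
    simp only [ContinuousMap.restrict_apply] at hv
    linarith
  · obtain ⟨φ, ψ, hL, hle, hv⟩ := exists_lipschitz_potential (μ.comap ((↑) : Ω → Ed d))
      (ρ.comap ((↑) : Ω → Ed d)) cΩ (K := K)
      (fun x y y' => hK x y y') _ hdual
    have hLon : LipschitzOnWith K (Function.extend ((↑) : Ω → Ed d) ψ 0) Ω := by
      rw [lipschitzOnWith_iff_restrict]
      have : Ω.domRestrict (Function.extend ((↑) : Ω → Ed d) ψ 0) = ψ := by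
        ext x
        exact Subtype.val_injective.extend_apply _ _ _
      rwa [this]
    obtain ⟨ψ', hψ'L, heq⟩ := hLon.extend_real
    have hψψ' : ∀ x : Ω, ψ x = ψ' x := fun x => by
      rw [← heq x.2]
      exact (Subtype.val_injective.extend_apply _ _ _).symm
    refine ⟨ψ', hψ'L, ?_⟩
    have hcont := continuous_ctrans hΩ hc hψ'L.continuous
    rw [hval, hint hμ hcont, hint hρ hψ'L.continuous]
    refine hv.trans ?_
    simp only [hψψ']
    gcongr ?_ + _
    refine integral_mono (integrable_contMap _ φ)
      (integrable_contMap _ ⟨fun x : Ω => ctrans c Ω ψ' x, hcont.comp continuous_subtype_val⟩) ?_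
    intro x
    refine le_ctrans hμ.nonempty fun y hy => ?_
    have := hle x ⟨y, hy⟩
    rw [hψψ'] at this
    exact le_sub_iff_add_le.2 this

lemma IsOptimalPlan.tCost_eq {c : Ed d → Ed d → ℝ} {γ : Measure (Ed d × Ed d)}
    (h : IsOptimalPlan c μ ρ γ) : tCost c μ ρ = ∫ p, c p.1 p.2 ∂γ := by
  refine IsLeast.csInf_eq ⟨⟨γ, h.1, rfl⟩, ?_⟩
  rintro r ⟨γ', hγ', rfl⟩
  exact h.2 γ' hγ'

lemma W2sq_comm (μ ρ : Measure (Ed d)) : W2sq μ ρ = W2sq ρ μ := by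
  have hsub : ∀ μ ρ : Measure (Ed d),
      {r | ∃ γ : Measure (Ed d × Ed d), IsCoupling μ ρ γ ∧ r = ∫ p, ‖p.1 - p.2‖ ^ 2 ∂γ} ⊆
      {r | ∃ γ : Measure (Ed d × Ed d), IsCoupling ρ μ γ ∧ r = ∫ p, ‖p.1 - p.2‖ ^ 2 ∂γ} := by
    rintro μ ρ r ⟨γ, hγ, rfl⟩
    refine ⟨_, hγ.swap, ?_⟩
    rw [integral_map measurable_swap.aemeasurable
      (by fun_prop : Continuous fun p : Ed d × Ed d => ‖p.1 - p.2‖ ^ 2).aestronglyMeasurable]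
    simp only [Prod.fst_swap, Prod.snd_swap, norm_sub_rev]
  exact congrArg sInf ((hsub μ ρ).antisymm (hsub ρ μ))

lemma continuous_c2 : Continuous fun p : Ed d × Ed d => c2 p.1 p.2 := by
  unfold c2; fun_prop

end Euclidean

/-! ### The Huber cost -/

section Huber

variable {lam : ℝ}

lemma huber_le_add (hlam : 0 < lam) (x y y' : Ed d) :
    huber lam x y ≤ huber lam x y' + lam * ‖y - y'‖ := by
  have h1 : ‖x - y‖ ≤ ‖x - y'‖ + ‖y - y'‖ := by
    have := norm_sub_le (x - y') (y - y')
    rwa [sub_sub_sub_cancel_right] at this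
  have h0 := norm_nonneg (x - y)
  have h0' := norm_nonneg (x - y')
  have h2 : lam * ‖x - y‖ ≤ lam * ‖x - y'‖ + lam * ‖y - y'‖ := by
    rw [← mul_add]; gcongr
  unfold huber
  split_ifs with ha hb hb
  · nlinarith [mul_nonneg hlam.le (norm_nonneg (y - y')), sq_nonneg (‖x - y‖ - ‖x - y'‖)]
  · nlinarith [mul_nonneg hlam.le (norm_nonneg (y - y')), mul_le_mul ha ha h0 hlam.le,
      mul_le_mul_of_nonneg_left (not_le.1 hb).le hlam.le]
  · nlinarith [sq_nonneg (lam - ‖x - y'‖)]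
  · linarith

lemma huber_lipschitz (hlam : 0 < lam) (x : Ed d) :
    LipschitzWith (Real.toNNReal lam) (huber lam x) :=
  LipschitzWith.of_le_add_mul _ fun y y' => by
    rw [Real.coe_toNNReal _ hlam.le, dist_eq_norm]
    exact huber_le_add hlam x y y'

lemma continuous_huber (lam : ℝ) : Continuous fun p : Ed d × Ed d => huber lam p.1 p.2 := by
  unfold huber
  refine Continuous.if_le (by fun_prop) (by fun_prop) (by fun_prop) (by fun_prop) ?_
  intro p hp
  rw [hp]; ring

lemma huber_le_c2 (x y : Ed d) : huber lam x y ≤ c2 x y := by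
  unfold huber c2
  split_ifs
  · exact le_rfl
  · nlinarith [sq_nonneg (‖x - y‖ - lam)]

lemma huber_eq_c2 {x y : Ed d} (h : ‖x - y‖ ≤ lam) : huber lam x y = c2 x y := if_pos h

lemma norm_le_of_c2_le_huber {x y : Ed d} (h : c2 x y ≤ huber lam x y) : ‖x - y‖ ≤ lam := by
  by_contra hn
  unfold huber c2 at h
  rw [if_neg hn] at h
  push Not at hn
  nlinarith [mul_pos (sub_pos.2 hn) (sub_pos.2 hn)]

/-- For a `λ`-Lipschitz `φ` the quadratic transform is dominated by the Huber one: a target `y`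
further than `λ` from `x` can be replaced by the point of the segment `[x, y]` at distance `λ`
from `x`, which lies in the convex set `Ω`. -/
lemma ctrans_c2_le_huber {Ω : Set (Ed d)} (hΩ : IsCompact Ω) (hconv : Convex ℝ Ω)
    (hlam : 0 < lam) {φ : Ed d → ℝ} (hφ : LipschitzWith (Real.toNNReal lam) φ)
    {x y : Ed d} (hx : x ∈ Ω) (hy : y ∈ Ω) : ctrans c2 Ω φ x ≤ huber lam x y - φ y := by
  by_cases h : ‖x - y‖ ≤ lam
  · rw [huber_eq_c2 h]
    exact ctrans_le hΩ continuous_c2 hφ.continuous x hy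
  · have hn := not_le.1 h
    have hpos : 0 < ‖x - y‖ := hlam.trans hn
    obtain ⟨t, ht⟩ : ∃ t, t = lam / ‖x - y‖ := ⟨_, rfl⟩
    have ht0 : 0 ≤ t := by rw [ht]; positivity
    have ht1 : t ≤ 1 := by rw [ht, div_le_one hpos]; exact hn.le
    have htl : t * ‖x - y‖ = lam := by rw [ht]; field_simp
    have hz : x + t • (y - x) ∈ Ω := hconv.add_smul_sub_mem hx hy ⟨ht0, ht1⟩
    have h1 := ctrans_le hΩ continuous_c2 hφ.continuous x hz
    have hd : ‖x - (x + t • (y - x))‖ = lam := by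
      rw [sub_add_cancel_left, norm_neg, norm_smul, Real.norm_of_nonneg ht0, norm_sub_rev, htl]
    have hd2 : ‖y - (x + t • (y - x))‖ = ‖x - y‖ - lam := by
      have : y - (x + t • (y - x)) = (1 - t) • (y - x) := by
        rw [sub_smul, one_smul]; abel
      rw [this, norm_smul, Real.norm_of_nonneg (by linarith), norm_sub_rev y x]
      linarith
    have h2 := hφ.le_add_mul y (x + t • (y - x))
    rw [Real.coe_toNNReal _ hlam.le, dist_eq_norm, hd2] at h2
    have hc : c2 x (x + t • (y - x)) = lam ^ 2 / 2 := by rw [c2, hd]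
    rw [hc] at h1
    unfold huber
    rw [if_neg h]
    nlinarith

end Huber

/-! ### Characterizations of `B_λ(μ)` -/

/-- characterizations of `B_λ(μ)`. For `Ω ⊂ ℝ^d` compact convex,
`μ, ρ ∈ 𝒫(Ω)` and `λ > 0`, the following are equivalent: (1) `ρ ∈ B_λ(μ)`; (2) there is a
`λ`-Lipschitz `φ ∈ ∂((1/2)W₂²(·,μ))(ρ)`, i.e. `λ`-Lipschitz with
`∫φ^{c₂}dμ + ∫φ dρ = (1/2)W₂²(ρ,μ)`; (3) `(1/2)W₂²(μ,ρ) = 𝓘_{c_{2,λ}}(μ,ρ)`. -/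
theorem stmt10 (d : ℕ) (Ω : Set (Ed d)) (hΩc : IsCompact Ω) (hΩconv : Convex ℝ Ω)
    (μ ρ : Measure (Ed d)) (hμ : ProbOn Ω μ) (hρ : ProbOn Ω ρ)
    (lam : ℝ) (hlam : 0 < lam) :
    (Bset lam μ ρ ↔
      ∃ φ : Ed d → ℝ, LipschitzOnWith (Real.toNNReal lam) φ Ω ∧
        (∫ x, ctrans c2 Ω φ x ∂μ) + ∫ x, φ x ∂ρ = W2sq ρ μ / 2) ∧
    (Bset lam μ ρ ↔ W2sq μ ρ / 2 = tCost (huber lam) μ ρ) := by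
  have hcW : Continuous fun p : Ed d × Ed d => ‖p.1 - p.2‖ ^ 2 := by fun_prop
  obtain ⟨γ₂, hγ₂, -⟩ := exists_optimal_and_potential (c := fun x y => ‖x - y‖ ^ 2) hΩc hμ hρ hcW
  obtain ⟨γh, hγh, hpot⟩ := exists_optimal_and_potential hΩc hμ hρ (continuous_huber lam)
  have hhalf : ∀ γ : Measure (Ed d × Ed d),
      ∫ p, c2 p.1 p.2 ∂γ = (∫ p, ‖p.1 - p.2‖ ^ 2 ∂γ) / 2 := fun γ => by
    unfold c2
    rw [integral_div]
  have hW : W2sq μ ρ / 2 = ∫ p, c2 p.1 p.2 ∂γ₂ := by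
    rw [hhalf, W2sq, hγ₂.tCost_eq]
  have hWle : ∀ γ, IsCoupling μ ρ γ → W2sq μ ρ / 2 ≤ ∫ p, c2 p.1 p.2 ∂γ := fun γ hγ => by
    rw [hW, hhalf, hhalf]
    linarith [hγ₂.2 γ hγ]
  have hH := hγh.tCost_eq
  have hmono : ∀ γ, IsCoupling μ ρ γ →
      ∫ p, huber lam p.1 p.2 ∂γ ≤ ∫ p, c2 p.1 p.2 ∂γ := fun γ hγ =>
    integral_mono (hγ.integrable hΩc hμ hρ (continuous_huber lam))
      (hγ.integrable hΩc hμ hρ continuous_c2) fun p => huber_le_c2 p.1 p.2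
  have hHW : tCost (huber lam) μ ρ ≤ W2sq μ ρ / 2 := by
    rw [hH, hW]
    exact (hγh.2 _ hγ₂.1).trans (hmono _ hγ₂.1)
  have h13 : Bset lam μ ρ ↔ W2sq μ ρ / 2 = tCost (huber lam) μ ρ := by
    constructor
    · rintro ⟨γ, hγ, hsupp⟩
      refine le_antisymm ?_ hHW
      have hae : ∀ᵐ p ∂γ, ‖p.1 - p.2‖ ≤ lam := by
        rw [ae_iff]
        simpa only [not_le] using hsupp
      rw [hγ.tCost_eq, integral_congr_ae (g := fun p : Ed d × Ed d => c2 p.1 p.2)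
        (by filter_upwards [hae] with p hp using huber_eq_c2 hp)]
      exact hWle γ hγ.1
    · intro h
      have heq : ∫ p, huber lam p.1 p.2 ∂γ₂ = ∫ p, c2 p.1 p.2 ∂γ₂ := by
        refine le_antisymm (hmono _ hγ₂.1) ?_
        rw [← hW, h, hH]
        exact hγh.2 _ hγ₂.1
      refine ⟨γ₂, ⟨hγ₂.1, fun γ' hγ' => ?_⟩, ?_⟩
      · rw [heq, ← hW, h, hH]
        exact hγh.2 _ hγ'
      · have hae := (integral_eq_iff_of_ae_le
          (hγ₂.1.integrable hΩc hμ hρ (continuous_huber lam))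
          (hγ₂.1.integrable hΩc hμ hρ continuous_c2)
          (Eventually.of_forall fun p => huber_le_c2 p.1 p.2)).1 heq
        have hle : ∀ᵐ p ∂γ₂, ‖p.1 - p.2‖ ≤ lam := by
          filter_upwards [hae] with p hp using norm_le_of_c2_le_huber hp.ge
        rw [ae_iff] at hle
        simpa only [not_le] using hle
  refine ⟨h13.trans ⟨fun h => ?_, ?_⟩, h13⟩
  · obtain ⟨ψ, hL, hval⟩ := hpot _ (huber_lipschitz hlam)
    refine ⟨ψ, hL.lipschitzOnWith, ?_⟩
    have hc2 := continuous_ctrans hΩc continuous_c2 hL.continuous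
    have hch := continuous_ctrans hΩc (continuous_huber lam) hL.continuous
    rw [← W2sq_comm]
    apply le_antisymm
    · rw [hW]
      refine weak_duality hΩc hμ hρ continuous_c2 hc2 hL.continuous (fun x _ y hy => ?_) hγ₂.1
      linarith [ctrans_le hΩc continuous_c2 hL.continuous x hy]
    · rw [h, hH]
      refine hval.trans ?_
      gcongr ?_ + _
      refine integral_mono (hμ.integrable hΩc hch) (hμ.integrable hΩc hc2) fun x => ?_
      refine le_ctrans hμ.nonempty fun y hy => ?_
      exact (ctrans_le hΩc (continuous_huber lam) hL.continuous x hy).trans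
        (sub_le_sub_right (huber_le_c2 x y) _)
  · rintro ⟨φ₀, hL₀, hval⟩
    -- only the values of the potential on `Ω` matter, so it may be taken Lipschitz on `ℝ^d`
    obtain ⟨φ, hL, heq⟩ := hL₀.extend_real
    have hctr : ctrans c2 Ω φ₀ = ctrans c2 Ω φ := by
      funext x
      refine congrArg sInf (Set.image_congr fun y hy => ?_)
      rw [heq hy]
    have hφ : ∫ x, φ₀ x ∂ρ = ∫ x, φ x ∂ρ := by
      refine integral_congr_ae ?_
      filter_upwards [show ∀ᵐ x ∂ρ, x ∈ Ω from hρ.2] with x hx using heq hx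
    rw [hctr, hφ, ← W2sq_comm] at hval
    refine le_antisymm ?_ hHW
    rw [← hval, hH]
    refine weak_duality hΩc hμ hρ (continuous_huber lam)
      (continuous_ctrans hΩc continuous_c2 hL.continuous) hL.continuous
      (fun x hx y hy => ?_) hγh.1
    linarith [ctrans_c2_le_huber hΩc hΩconv hlam hL hx hy]
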